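/- Let I ⊆ ℝ be a compact nontrivial interval, x₀ ∈ I with x₀ < sup I, and let f₀ : I → ℝ be continuous with f₀(x₀) = 0 and f₀(x) ≠ 0 for x ≠ x₀. Let ℱ be a set of continuous functions I → ℝ that is closed under convex combinations and order-convex (if r₁, r₂ ∈ ℱ and r : I → ℝ is continuous with r₁(x) ≤ r(x) ≤ r₂(x) for all x ∈ I, then r ∈ ℱ), and such that every r ∈ ℱ satisfies r(x) = o(f₀(x)) as x → x₀ from the right. Then the family {A^[f₀+r] : r ∈ ℱ and f₀+r is strictly monotone on I} is an interval-type set: whenever r₁, r₂ ∈ ℱ are such that f₀+r₁ and f₀+r₂ are strictly monotone, h : I → ℝ is continuous and strictly monotone, and A^[f₀+r₁] ≤ A^[h] ≤ A^[f₀+r₂], then there exists r ∈ ℱ such that f₀+r is strictly monotone and A^[h] = A^[f₀+r]. -/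

import Mathlib

open Set Function Filter

/-- The quasi-arithmetic mean generated by `f` on the interval `I`,
applied to a vector `a ∈ Iⁿ`: `f⁻¹((f a₁ + ⋯ + f aₙ)/n)`, where the
inverse of `f` is taken on `I`. -/
noncomputable def qam (I : Set ℝ) (f : ℝ → ℝ) {n : ℕ} (a : Fin n → ℝ) : ℝ :=
  Function.invFunOn f I ((∑ i, f (a i)) / n)

/-- The natural (pointwise) partial order on quasi-arithmetic means:
`A^[f] ≤ A^[g]` iff `A^[f](a) ≤ A^[g](a)` for every `n ≥ 1` and every `a ∈ Iⁿ`. -/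
def qamLE (I : Set ℝ) (f g : ℝ → ℝ) : Prop :=
  ∀ n : ℕ, 1 ≤ n → ∀ a : Fin n → ℝ, (∀ i, a i ∈ I) → qam I f a ≤ qam I g a

/-- `A^[f] = A^[g]` : equality of the two quasi-arithmetic means as means. -/
def qamEQ (I : Set ℝ) (f g : ℝ → ℝ) : Prop :=
  ∀ n : ℕ, 1 ≤ n → ∀ a : Fin n → ℝ, (∀ i, a i ∈ I) → qam I f a = qam I g a

/-- `f` is strictly monotone on `I` (strictly increasing or strictly decreasing). -/
def StrictMonoOrAntiOn (f : ℝ → ℝ) (I : Set ℝ) : Prop :=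
  StrictMonoOn f I ∨ StrictAntiOn f I

/-!
Write `f = f₀ + r₁` and `g = f₀ + r₂`. The little-o condition forces `f x₀ = g x₀ = 0` and
`g / f → 1` at `x₀⁺`, so `f` and `g` are monotone in the same direction; changing signs does not
change the means, so all generators may be taken to be increasing. Then `A^[f] ≤ A^[h] ≤ A^[g]` says
that `h ∘ f⁻¹` and `g ∘ h⁻¹` are convex. Let `c` and `d` be their right derivatives at the images of
`x₀`. The chain rule gives `c * d = 1`, and the tangent line inequalities read
`c * f ≤ h - h x₀` and `h - h x₀ ≤ d⁻¹ * g = c * g` on all of `I`. Hence `f ≤ c⁻¹ * (h - h x₀) ≤ g`,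
so the middle function, which generates the same mean as `h`, has the form `f₀ + r` with `r` between
`r₁` and `r₂`.
-/

open Asymptotics Topology

/-! ### Convex functions -/

lemma ordConnected_of_isClosed_of_midpoint_mem {T : Set ℝ} (hT : IsClosed T)
    (hmid : ∀ x ∈ T, ∀ y ∈ T, midpoint ℝ x y ∈ T) : T.OrdConnected := by
  refine ⟨fun x hx y hy z hz => by_contra fun hzT => ?_⟩
  -- The points of `T` closest to `z` on either side enclose a gap of `T`.
  obtain ⟨p, ⟨hpT, hpz⟩, hp⟩ : ∃ p, IsGreatest (T ∩ Iic z) p :=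
    ⟨_, (hT.inter isClosed_Iic).isGreatest_csSup ⟨x, hx, hz.1⟩ ⟨z, fun _ h => h.2⟩⟩
  obtain ⟨q, ⟨hqT, hzq⟩, hq⟩ : ∃ q, IsLeast (T ∩ Ici z) q :=
    ⟨_, (hT.inter isClosed_Ici).isLeast_csInf ⟨y, hy, hz.2⟩ ⟨z, fun _ h => h.2⟩⟩
  have hpq : p < q := (lt_of_le_of_ne hpz (ne_of_mem_of_not_mem hpT hzT)).trans_le hzq
  rcases le_total (midpoint ℝ p q) z with h | h
  · exact hpq.not_ge (midpoint_le_left.1 (hp ⟨hmid p hpT q hqT, h⟩))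
  · exact hpq.not_ge (right_le_midpoint.1 (hq ⟨hmid p hpT q hqT, h⟩))

lemma convexOn_of_map_midpoint_le {E : Type*} [AddCommGroup E] [Module ℝ E] [TopologicalSpace E]
    [IsTopologicalAddGroup E] [ContinuousSMul ℝ E] {s : Set E} {φ : E → ℝ} (hs : Convex ℝ s)
    (hφ : ContinuousOn φ s)
    (hmid : ∀ u ∈ s, ∀ v ∈ s, φ (midpoint ℝ u v) ≤ midpoint ℝ (φ u) (φ v)) : ConvexOn ℝ s φ := by
  refine ⟨hs, fun u hu v hv a b ha hb hab => ?_⟩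
  let ℓ : ℝ →ᵃ[ℝ] E := AffineMap.lineMap u v
  let m : ℝ →ᵃ[ℝ] ℝ := AffineMap.lineMap (φ u) (φ v)
  have hℓs : MapsTo ℓ (Icc 0 1) s := hs.mapsTo_lineMap hu hv
  let T := {t ∈ Icc (0 : ℝ) 1 | φ (ℓ t) ≤ m t}
  have hT : IsClosed T :=
    isClosed_Icc.isClosed_le (hφ.comp AffineMap.lineMap_continuous.continuousOn hℓs)
      AffineMap.lineMap_continuous.continuousOn
  have hTmid : ∀ t ∈ T, ∀ t' ∈ T, midpoint ℝ t t' ∈ T := fun t ht t' ht' =>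
    ⟨(convex_Icc 0 1).midpoint_mem ht.1 ht'.1, calc
      φ (ℓ (midpoint ℝ t t')) = φ (midpoint ℝ (ℓ t) (ℓ t')) := by rw [ℓ.map_midpoint]
      _ ≤ midpoint ℝ (φ (ℓ t)) (φ (ℓ t')) := hmid _ (hℓs ht.1) _ (hℓs ht'.1)
      _ ≤ midpoint ℝ (m t) (m t') := midpoint_le_midpoint ht.2 ht'.2
      _ = m (midpoint ℝ t t') := (m.map_midpoint t t').symm⟩
  have h0 : (0 : ℝ) ∈ T := ⟨by simp, by simp [ℓ, m]⟩
  have h1 : (1 : ℝ) ∈ T := ⟨by simp, by simp [ℓ, m]⟩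
  have hbT : b ∈ T :=
    (ordConnected_of_isClosed_of_midpoint_mem hT hTmid).out h0 h1 ⟨hb, by linarith⟩
  obtain rfl : a = 1 - b := by linarith
  simpa only [ℓ, m, AffineMap.lineMap_apply_module] using hbT.2

section RightTangent

variable {s : Set ℝ} {φ : ℝ → ℝ} {a b c x : ℝ}

lemma differentiableWithinAt_Ioi_of_bddBelow_slope (hφ : ConvexOn ℝ s φ) (ha : a ∈ s) (hb : b ∈ s)
    (hab : a < b) (hbdd : BddBelow (slope φ a '' {y ∈ s | a < y})) :
    DifferentiableWithinAt ℝ φ (Ioi a) a := by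
  have hsub : Ioo a b ⊆ {y ∈ s | a < y} := fun y hy =>
    ⟨hφ.1.ordConnected.out ha hb (Ioo_subset_Icc_self hy), hy.1⟩
  have hlim := ((hφ.monotoneOn_slope_gt ha).mono hsub).tendsto_nhdsWithin_Ioo_right
    (nonempty_Ioo.2 hab) (hbdd.mono (image_mono hsub))
  exact ((hasDerivWithinAt_iff_tendsto_slope' self_notMem_Ioi).2 hlim).differentiableWithinAt

lemma mul_sub_le_of_hasDerivWithinAt_Ioi (hφ : ConvexOn ℝ s φ) (ha : a ∈ s) (hb : b ∈ s)
    (hab : a < b) (hc : HasDerivWithinAt φ c (Ioi a) a) (hx : x ∈ s) :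
    c * (x - a) ≤ φ x - φ a := by
  rcases lt_trichotomy x a with hxa | rfl | hax
  · have hslope : slope φ a x ≤ c := by
      refine ge_of_tendsto ((hasDerivWithinAt_iff_tendsto_slope' self_notMem_Ioi).1 hc) ?_
      filter_upwards [Ioo_mem_nhdsGT hab] with y hy
      have hys : y ∈ s := hφ.1.ordConnected.out ha hb (Ioo_subset_Icc_self hy)
      exact hφ.slope_mono ha ⟨hx, hxa.ne⟩ ⟨hys, hy.1.ne'⟩ (hxa.trans hy.1).le
    rwa [slope_def_field, div_le_iff_of_neg (sub_neg.2 hxa)] at hslope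
  · simp
  · have hslope := hφ.le_slope_of_hasDerivWithinAt_Ioi ha hx hax hc
    rwa [slope_def_field, le_div_iff₀ (sub_pos.2 hax)] at hslope

end RightTangent

lemma continuousOn_invFunOn_image {α β : Type*} [Nonempty α]
    [LinearOrder α] [TopologicalSpace α] [OrderTopology α]
    [LinearOrder β] [TopologicalSpace β] [OrderTopology β] {f : α → β} {s : Set α}
    (hf : StrictMonoOn f s) (hs : s.OrdConnected) (hfs : (f '' s).OrdConnected) :
    ContinuousOn (invFunOn f s) (f '' s) := by
  have hinv : (f '' s).domRestrict (invFunOn f s) = Subtype.val ∘ (hf.orderIso f s).symm := by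
    funext y
    obtain ⟨x, rfl⟩ := (hf.orderIso f s).surjective y
    rw [comp_apply, OrderIso.symm_apply_apply]
    exact hf.injOn.leftInvOn_invFunOn x.2
  rw [continuousOn_iff_continuous_domRestrict, hinv]
  exact continuous_subtype_val.comp (hf.orderIso f s).symm.continuous

/-! ### Quasi-arithmetic means -/

section Mean

variable {I : Set ℝ} {f g f' g' : ℝ → ℝ} {n : ℕ} {a : Fin n → ℝ}

lemma sum_div_mem_image (hI : I.OrdConnected) (hf : ContinuousOn f I) (hn : 1 ≤ n)
    (ha : ∀ i, a i ∈ I) : (∑ i, f (a i)) / n ∈ f '' I := by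
  have hn₀ : (n : ℝ) ≠ 0 := by positivity
  have hconv : Convex ℝ (f '' I) := (hI.isPreconnected.image f hf).ordConnected.convex
  have hmem := hconv.sum_mem (t := Finset.univ) (w := fun _ : Fin n => (n : ℝ)⁻¹)
    (fun _ _ => by positivity) (by simp [hn₀]) (fun i _ => mem_image_of_mem f (ha i))
  rw [div_eq_inv_mul, Finset.mul_sum]
  exact hmem

lemma qam_mem (hI : I.OrdConnected) (hf : ContinuousOn f I) (hn : 1 ≤ n)
    (ha : ∀ i, a i ∈ I) : qam I f a ∈ I :=
  invFunOn_mem (sum_div_mem_image hI hf hn ha)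

lemma apply_qam (hI : I.OrdConnected) (hf : ContinuousOn f I) (hn : 1 ≤ n)
    (ha : ∀ i, a i ∈ I) : f (qam I f a) = (∑ i, f (a i)) / n :=
  invFunOn_eq (sum_div_mem_image hI hf hn ha)

lemma qamEQ_affine (hI : I.OrdConnected) (hf : ContinuousOn f I) (hinj : InjOn f I) {s : ℝ}
    (hs : s ≠ 0) (b : ℝ) : qamEQ I f (fun x => s * f x + b) := by
  intro n hn a ha
  have hn₀ : (n : ℝ) ≠ 0 := by positivity
  have hf' : ContinuousOn (fun x => s * f x + b) I := by fun_prop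
  refine hinj (qam_mem hI hf hn ha) (qam_mem hI hf' hn ha)
    (mul_left_cancel₀ hs (add_right_cancel (b := b) ?_))
  calc s * f (qam I f a) + b = s * ((∑ i, f (a i)) / n) + b := by rw [apply_qam hI hf hn ha]
    _ = (∑ i, (s * f (a i) + b)) / n := by
      rw [Finset.sum_add_distrib, ← Finset.mul_sum, Fin.sum_const, nsmul_eq_mul]
      field_simp
    _ = s * f (qam I (fun x => s * f x + b) a) + b := (apply_qam hI hf' hn ha).symm

lemma qamEQ_neg (hI : I.OrdConnected) (hf : ContinuousOn f I) (hinj : InjOn f I) :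
    qamEQ I f (-f) := by
  simpa only [neg_one_mul, add_zero] using!
    qamEQ_affine hI hf hinj (neg_ne_zero.2 one_ne_zero) 0

lemma qamLE.congr (hfg : qamLE I f g) (hf : qamEQ I f f') (hg : qamEQ I g g') :
    qamLE I f' g' := by
  intro n hn a ha
  rw [← hf n hn a ha, ← hg n hn a ha]
  exact hfg n hn a ha

lemma qamEQ.refl (I : Set ℝ) (f : ℝ → ℝ) : qamEQ I f f := fun _ _ _ _ => rfl

lemma StrictMonoOrAntiOn.injOn (hf : StrictMonoOrAntiOn f I) : InjOn f I :=
  hf.elim StrictMonoOn.injOn StrictAntiOn.injOn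

lemma StrictMonoOrAntiOn.affine (hf : StrictMonoOrAntiOn f I) {s : ℝ} (hs : s ≠ 0) (b : ℝ) :
    StrictMonoOrAntiOn (fun x => s * f x + b) I := by
  rcases hs.lt_or_gt with hs | hs
  · have hanti : StrictAnti fun y => s * y + b := (strictAnti_mul_left hs).add_const b
    exact hf.symm.imp hanti.comp_strictAntiOn hanti.comp_strictMonoOn
  · have hmono : StrictMono fun y => s * y + b := (strictMono_mul_left_of_pos hs).add_const b
    exact hf.imp hmono.comp_strictMonoOn hmono.comp_strictAntiOn

end Mean

/-! ### Comparison of means -/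

section Comparison

variable {I : Set ℝ} {f g h : ℝ → ℝ} {x₀ : ℝ}

lemma qamLE.convexOn (hI : I.OrdConnected) (hf : ContinuousOn f I) (hfm : StrictMonoOn f I)
    (hh : ContinuousOn h I) (hhm : MonotoneOn h I) (hfh : qamLE I f h) :
    ConvexOn ℝ (f '' I) (h ∘ invFunOn f I) := by
  have hfI : (f '' I).OrdConnected := (hI.isPreconnected.image f hf).ordConnected
  have hleft := hfm.injOn.leftInvOn_invFunOn
  refine convexOn_of_map_midpoint_le hfI.convex
    (hh.comp (continuousOn_invFunOn_image hfm hI hfI) fun _ hv => invFunOn_mem hv) ?_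
  rintro _ ⟨x, hx, rfl⟩ _ ⟨y, hy, rfl⟩
  have hxy : ∀ i : Fin 2, ![x, y] i ∈ I := Fin.forall_fin_two.2 ⟨hx, hy⟩
  have hmean : ∀ k : ℝ → ℝ, (∑ i, k (![x, y] i)) / (2 : ℕ) = midpoint ℝ (k x) (k y) := fun k => by
    simp [midpoint_eq_smul_add, div_eq_inv_mul]
  calc h (invFunOn f I (midpoint ℝ (f x) (f y)))
      = h (qam I f ![x, y]) := by rw [qam, hmean]
    _ ≤ h (qam I h ![x, y]) :=
      hhm (qam_mem hI hf one_le_two hxy) (qam_mem hI hh one_le_two hxy)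
        (hfh 2 one_le_two _ hxy)
    _ = midpoint ℝ (h x) (h y) := (apply_qam hI hh one_le_two hxy).trans (hmean h)
    _ = midpoint ℝ (h (invFunOn f I (f x))) (h (invFunOn f I (f y))) := by rw [hleft hx, hleft hy]

/-- The limit `c` is the right derivative of the convex function `h ∘ f⁻¹` at `f x₀`, and the
inequality is that of its tangent line. -/
lemma qamLE.exists_tendsto_slope (hI : I.OrdConnected) (hf : ContinuousOn f I)
    (hfm : StrictMonoOn f I) (hh : ContinuousOn h I) (hhm : MonotoneOn h I) (hfh : qamLE I f h)
    (hx₀ : x₀ ∈ I) (hIx₀ : I ∈ 𝓝[>] x₀) :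
    ∃ c, 0 ≤ c ∧ Tendsto (fun x => (h x - h x₀) / (f x - f x₀)) (𝓝[>] x₀) (𝓝 c) ∧
      ∀ x ∈ I, c * (f x - f x₀) ≤ h x - h x₀ := by
  set F := h ∘ invFunOn f I
  have hF : ConvexOn ℝ (f '' I) F := hfh.convexOn hI hf hfm hh hhm
  have hFf : ∀ x ∈ I, F (f x) = h x := fun x hx =>
    congrArg h (hfm.injOn.leftInvOn_invFunOn hx)
  have hmem : f x₀ ∈ f '' I := mem_image_of_mem f hx₀
  obtain ⟨y, hyI, hy⟩ : ∃ y ∈ I, x₀ < y :=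
    (eventually_mem_set.2 hIx₀ |>.and self_mem_nhdsWithin).exists
  have hnonneg : ∀ x ∈ I, x₀ < x → 0 ≤ slope F (f x₀) (f x) := fun x hx hx₀x => by
    rw [slope_def_field, hFf x hx, hFf x₀ hx₀]
    exact div_nonneg (sub_nonneg.2 (hhm hx₀ hx hx₀x.le)) (sub_nonneg.2 (hfm hx₀ hx hx₀x).le)
  have hbdd : BddBelow (slope F (f x₀) '' {v ∈ f '' I | f x₀ < v}) := by
    refine ⟨0, ?_⟩
    rintro _ ⟨_, ⟨⟨x, hx, rfl⟩, hlt⟩, rfl⟩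
    exact hnonneg x hx ((hfm.lt_iff_lt hx₀ hx).1 hlt)
  have hderiv := (differentiableWithinAt_Ioi_of_bddBelow_slope hF hmem (mem_image_of_mem f hyI)
    (hfm hx₀ hyI hy) hbdd).hasDerivWithinAt
  have hf_lim : Tendsto f (𝓝[>] x₀) (𝓝[>] f x₀) :=
    tendsto_nhdsWithin_iff.2 ⟨(hf x₀ hx₀).mono_of_mem_nhdsWithin hIx₀, by
      filter_upwards [hIx₀, self_mem_nhdsWithin] with x hx hx₀x using hfm hx₀ hx hx₀x⟩
  have hlim := ((hasDerivWithinAt_iff_tendsto_slope' self_notMem_Ioi).1 hderiv).comp hf_lim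
  refine ⟨derivWithin F (Ioi (f x₀)) (f x₀), ge_of_tendsto hlim ?_, hlim.congr' ?_, fun x hx => ?_⟩
  · filter_upwards [hIx₀, self_mem_nhdsWithin] with x hx hx₀x using hnonneg x hx hx₀x
  · filter_upwards [hIx₀] with x hx
    rw [comp_apply, slope_def_field, hFf x hx, hFf x₀ hx₀]
  · rw [← hFf x hx, ← hFf x₀ hx₀]
    exact mul_sub_le_of_hasDerivWithinAt_Ioi hF hmem (mem_image_of_mem f hyI) (hfm hx₀ hyI hy)
      hderiv (mem_image_of_mem f hx)

lemma exists_pos_mul_sub_between (hI : I.OrdConnected) (hf : ContinuousOn f I)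
    (hfm : StrictMonoOn f I) (hg : ContinuousOn g I) (hgm : StrictMonoOn g I)
    (hh : ContinuousOn h I) (hhm : StrictMonoOn h I) (hfh : qamLE I f h) (hhg : qamLE I h g)
    (hx₀ : x₀ ∈ I) (hIx₀ : I ∈ 𝓝[>] x₀)
    (hgf : (fun x => g x - g x₀) ~[𝓝[>] x₀] (fun x => f x - f x₀)) :
    ∃ c, 0 < c ∧ ∀ x ∈ I, c * (f x - f x₀) ≤ h x - h x₀ ∧ h x - h x₀ ≤ c * (g x - g x₀) := by
  obtain ⟨c, hc₀, hc, hfc⟩ := hfh.exists_tendsto_slope hI hf hfm hh hhm.monotoneOn hx₀ hIx₀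
  obtain ⟨d, -, hd, hgd⟩ := hhg.exists_tendsto_slope hI hh hhm hg hgm.monotoneOn hx₀ hIx₀
  have hne : ∀ {k : ℝ → ℝ}, StrictMonoOn k I → ∀ᶠ x in 𝓝[>] x₀, k x - k x₀ ≠ 0 := fun hk => by
    filter_upwards [hIx₀, self_mem_nhdsWithin] with x hx hx₀x
    exact (sub_pos.2 (hk hx₀ hx hx₀x)).ne'
  have hcd : c * d = 1 := by
    refine tendsto_nhds_unique ((hc.mul hd).congr' ?_)
      ((isEquivalent_iff_tendsto_one (hne hfm)).1 hgf)
    filter_upwards [hne hhm] with x hx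
    rw [Pi.div_apply, mul_comm, div_mul_div_cancel₀ hx]
  have hcpos : 0 < c := hc₀.lt_of_ne' (left_ne_zero_of_mul_eq_one hcd)
  refine ⟨c, hcpos, fun x hx => ⟨hfc x hx, ?_⟩⟩
  calc h x - h x₀ = c * (d * (h x - h x₀)) := by rw [← mul_assoc, hcd, one_mul]
    _ ≤ c * (g x - g x₀) := mul_le_mul_of_nonneg_left (hgd x hx) hc₀

lemma exists_affine_between_of_strictMonoOn (hI : I.OrdConnected) (hf : ContinuousOn f I)
    (hfm : StrictMonoOn f I) (hg : ContinuousOn g I) (hgm : StrictMonoOn g I)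
    (hh : ContinuousOn h I) (hhm : StrictMonoOrAntiOn h I) (hfh : qamLE I f h) (hhg : qamLE I h g)
    (hx₀ : x₀ ∈ I) (hIx₀ : I ∈ 𝓝[>] x₀) (hfg₀ : f x₀ = g x₀)
    (hgf : (fun x => g x - g x₀) ~[𝓝[>] x₀] (fun x => f x - f x₀)) :
    ∃ s b, s ≠ 0 ∧ ∀ x ∈ I, f x ≤ s * h x + b ∧ s * h x + b ≤ g x := by
  wlog hmono : StrictMonoOn h I generalizing h
  · have hneg := qamEQ_neg hI hh hhm.injOn
    have hanti : StrictAntiOn h I := hhm.resolve_left hmono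
    obtain ⟨s, b, hs, hbetween⟩ := this hh.neg (.inl hanti.neg)
      (hfh.congr (.refl I f) hneg) (hhg.congr hneg (.refl I g)) hanti.neg
    exact ⟨-s, b, neg_ne_zero.2 hs, by simpa using hbetween⟩
  obtain ⟨c, hc, hbetween⟩ :=
    exists_pos_mul_sub_between hI hf hfm hg hgm hh hmono hfh hhg hx₀ hIx₀ hgf
  refine ⟨c⁻¹, f x₀ - c⁻¹ * h x₀, inv_ne_zero hc.ne', fun x hx => ?_⟩
  have hlower := (le_inv_mul_iff₀ hc).2 (hbetween x hx).1
  have hupper := (inv_mul_le_iff₀ hc).2 (hbetween x hx).2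
  constructor <;> linarith

lemma strictMonoOn_or_strictAntiOn_of_isEquivalent (hf : StrictMonoOrAntiOn f I)
    (hg : StrictMonoOrAntiOn g I) (hx₀ : x₀ ∈ I) (hIx₀ : I ∈ 𝓝[>] x₀)
    (hgf : (fun x => g x - g x₀) ~[𝓝[>] x₀] (fun x => f x - f x₀)) :
    (StrictMonoOn f I ∧ StrictMonoOn g I) ∨ (StrictAntiOn f I ∧ StrictAntiOn g I) := by
  obtain ⟨q, hq, hgq⟩ := hgf.exists_eq_mul
  obtain ⟨x, hxq, hqx, hxI, hx⟩ := (hgq.and ((hq.eventually_const_lt one_pos).and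
    (eventually_mem_set.2 hIx₀ |>.and self_mem_nhdsWithin))).exists
  have hsign : g x - g x₀ = q x * (f x - f x₀) := hxq
  rcases hf with hf | hf <;> rcases hg with hg | hg
  · exact .inl ⟨hf, hg⟩
  · nlinarith [hf hx₀ hxI hx, hg hx₀ hxI hx]
  · nlinarith [hf hx₀ hxI hx, hg hx₀ hxI hx]
  · exact .inr ⟨hf, hg⟩

lemma exists_affine_between (hI : I.OrdConnected) (hf : ContinuousOn f I)
    (hfm : StrictMonoOrAntiOn f I) (hg : ContinuousOn g I) (hgm : StrictMonoOrAntiOn g I)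
    (hh : ContinuousOn h I) (hhm : StrictMonoOrAntiOn h I) (hfh : qamLE I f h) (hhg : qamLE I h g)
    (hx₀ : x₀ ∈ I) (hIx₀ : I ∈ 𝓝[>] x₀) (hfg₀ : f x₀ = g x₀)
    (hgf : (fun x => g x - g x₀) ~[𝓝[>] x₀] (fun x => f x - f x₀)) :
    ∃ s b, s ≠ 0 ∧ ((∀ x ∈ I, f x ≤ s * h x + b ∧ s * h x + b ≤ g x) ∨
      ∀ x ∈ I, g x ≤ s * h x + b ∧ s * h x + b ≤ f x) := by
  rcases strictMonoOn_or_strictAntiOn_of_isEquivalent hfm hgm hx₀ hIx₀ hgf with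
    ⟨hf_mono, hg_mono⟩ | ⟨hf_anti, hg_anti⟩
  · obtain ⟨s, b, hs, hbetween⟩ := exists_affine_between_of_strictMonoOn hI hf hf_mono hg hg_mono
      hh hhm hfh hhg hx₀ hIx₀ hfg₀ hgf
    exact ⟨s, b, hs, .inl hbetween⟩
  · have hgf_neg : (fun x => (-g) x - (-g) x₀) ~[𝓝[>] x₀] (fun x => (-f) x - (-f) x₀) := by
      simpa only [Pi.neg_apply, neg_sub_neg, neg_sub] using! hgf.neg
    obtain ⟨s, b, hs, hbetween⟩ := exists_affine_between_of_strictMonoOn hI hf.neg hf_anti.neg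
      hg.neg hg_anti.neg hh hhm (hfh.congr (qamEQ_neg hI hf hfm.injOn) (.refl I h))
      (hhg.congr (.refl I h) (qamEQ_neg hI hg hgm.injOn)) hx₀ hIx₀ (congrArg Neg.neg hfg₀) hgf_neg
    refine ⟨-s, -b, neg_ne_zero.2 hs, .inr fun x hx => ?_⟩
    obtain ⟨hlower, hupper⟩ := hbetween x hx
    simp only [Pi.neg_apply] at hlower hupper
    constructor <;> linarith

end Comparison

/-! ### Error families -/

theorem qam_interval_type_of_error_family_general {I : Set ℝ} (hI : I.OrdConnected)
    {x₀ : ℝ} (hx₀ : x₀ ∈ I) (hx₀sup : ∃ y ∈ I, x₀ < y)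
    {f₀ : ℝ → ℝ} (hf₀c : ContinuousOn f₀ I) (hf₀x₀ : f₀ x₀ = 0)
    {𝓕 : Set (ℝ → ℝ)} (h𝓕cont : ∀ r ∈ 𝓕, ContinuousOn r I)
    (h𝓕ord : ∀ r₁ ∈ 𝓕, ∀ r₂ ∈ 𝓕, ∀ r : ℝ → ℝ, ContinuousOn r I →
      (∀ x ∈ I, r₁ x ≤ r x ∧ r x ≤ r₂ x) → r ∈ 𝓕)
    (h𝓕o : ∀ r ∈ 𝓕, r =o[𝓝[>] x₀] f₀)
    {r₁ : ℝ → ℝ} (hr₁ : r₁ ∈ 𝓕) (hm₁ : StrictMonoOrAntiOn (fun x => f₀ x + r₁ x) I)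
    {r₂ : ℝ → ℝ} (hr₂ : r₂ ∈ 𝓕) (hm₂ : StrictMonoOrAntiOn (fun x => f₀ x + r₂ x) I)
    {h : ℝ → ℝ} (hhc : ContinuousOn h I) (hhm : StrictMonoOrAntiOn h I)
    (hle₁ : qamLE I (fun x => f₀ x + r₁ x) h) (hle₂ : qamLE I h (fun x => f₀ x + r₂ x)) :
    ∃ r ∈ 𝓕, StrictMonoOrAntiOn (fun x => f₀ x + r x) I ∧
      qamEQ I h (fun x => f₀ x + r x) := by
  obtain ⟨y, hy, hx₀y⟩ := hx₀sup
  have hIx₀ : I ∈ 𝓝[>] x₀ := hI.mem_nhdsGT hx₀ hy hx₀y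
  have hright : ∀ {k : ℝ → ℝ}, ContinuousOn k I → Tendsto k (𝓝[>] x₀) (𝓝 (k x₀)) := fun hk =>
    (hk x₀ hx₀).mono_of_mem_nhdsWithin hIx₀
  have hzero : ∀ r ∈ 𝓕, f₀ x₀ + r x₀ = 0 := fun r hr => by
    have hrx₀ : r x₀ = 0 := tendsto_nhds_unique (hright (h𝓕cont r hr))
      ((h𝓕o r hr).trans_tendsto (hf₀x₀ ▸ hright hf₀c))
    rw [hf₀x₀, hrx₀, add_zero]
  have hequiv : ∀ r ∈ 𝓕, (fun x => f₀ x + r x) ~[𝓝[>] x₀] f₀ := fun r hr =>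
    IsEquivalent.refl.add_isLittleO (h𝓕o r hr)
  obtain ⟨s, b, hs, hbetween⟩ := exists_affine_between hI (hf₀c.fun_add (h𝓕cont r₁ hr₁)) hm₁
    (hf₀c.fun_add (h𝓕cont r₂ hr₂)) hm₂ hhc hhm hle₁ hle₂ hx₀ hIx₀
    ((hzero r₁ hr₁).trans (hzero r₂ hr₂).symm) (by
      simpa only [hzero r₁ hr₁, hzero r₂ hr₂, sub_zero]
        using (hequiv r₂ hr₂).trans (hequiv r₁ hr₁).symm)
  have hrc : ContinuousOn (fun x => s * h x + b - f₀ x) I := by fun_prop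
  refine ⟨fun x => s * h x + b - f₀ x, ?_, ?_⟩
  · exact hbetween.elim
      (fun hb => h𝓕ord r₁ hr₁ r₂ hr₂ _ hrc fun x hx =>
        ⟨le_sub_iff_add_le'.2 (hb x hx).1, sub_le_iff_le_add'.2 (hb x hx).2⟩)
      (fun hb => h𝓕ord r₂ hr₂ r₁ hr₁ _ hrc fun x hx =>
        ⟨le_sub_iff_add_le'.2 (hb x hx).1, sub_le_iff_le_add'.2 (hb x hx).2⟩)
  · simp only [add_sub_cancel]
    exact ⟨hhm.affine hs b, qamEQ_affine hI hhc hhm.injOn hs b⟩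

/-- Theorem 1: Let `I` be a compact nontrivial interval, `x₀ ∈ I` with
`x₀ < sup I`, `f₀` continuous with `f₀(x₀) = 0` and `f₀ ≠ 0` off `x₀`. Let `𝓕` be a
set of continuous functions on `I`, closed under convex combinations and order-convex,
with every member `o(f₀)` as `x → x₀⁺`. Then the family
`{A^[f₀+r] : r ∈ 𝓕, f₀+r strictly monotone}` is an interval-type set. -/
theorem qam_interval_type_of_error_family
    (I : Set ℝ) (hI : I.OrdConnected) (hIc : IsCompact I)
    (hInontriv : ∃ x ∈ I, ∃ y ∈ I, x < y)
    (x₀ : ℝ) (hx₀ : x₀ ∈ I) (hx₀sup : ∃ y ∈ I, x₀ < y)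
    (f₀ : ℝ → ℝ) (hf₀c : ContinuousOn f₀ I) (hf₀x₀ : f₀ x₀ = 0)
    (hf₀ne : ∀ x ∈ I, x ≠ x₀ → f₀ x ≠ 0)
    (𝓕 : Set (ℝ → ℝ))
    (h𝓕cont : ∀ r ∈ 𝓕, ContinuousOn r I)
    (h𝓕convex : ∀ r₁ ∈ 𝓕, ∀ r₂ ∈ 𝓕, ∀ t ∈ Icc (0:ℝ) 1,
      (fun x => t * r₁ x + (1 - t) * r₂ x) ∈ 𝓕)
    (h𝓕ord : ∀ r₁ ∈ 𝓕, ∀ r₂ ∈ 𝓕, ∀ r : ℝ → ℝ, ContinuousOn r I →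
      (∀ x ∈ I, r₁ x ≤ r x ∧ r x ≤ r₂ x) → r ∈ 𝓕)
    (h𝓕o : ∀ r ∈ 𝓕,
      Filter.Tendsto (fun x => r x / f₀ x) (nhdsWithin x₀ (I ∩ Ioi x₀)) (nhds 0))
    (r₁ : ℝ → ℝ) (hr₁ : r₁ ∈ 𝓕) (hm₁ : StrictMonoOrAntiOn (fun x => f₀ x + r₁ x) I)
    (r₂ : ℝ → ℝ) (hr₂ : r₂ ∈ 𝓕) (hm₂ : StrictMonoOrAntiOn (fun x => f₀ x + r₂ x) I)
    (h : ℝ → ℝ) (hhc : ContinuousOn h I) (hhm : StrictMonoOrAntiOn h I)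
    (hle₁ : qamLE I (fun x => f₀ x + r₁ x) h)
    (hle₂ : qamLE I h (fun x => f₀ x + r₂ x)) :
    ∃ r ∈ 𝓕, StrictMonoOrAntiOn (fun x => f₀ x + r x) I ∧
      qamEQ I h (fun x => f₀ x + r x) := by
  obtain ⟨y, hy, hx₀y⟩ := hx₀sup
  have hnhds : 𝓝[I ∩ Ioi x₀] x₀ = 𝓝[>] x₀ :=
    nhdsWithin_inter_of_mem (hI.mem_nhdsGT hx₀ hy hx₀y)
  refine qam_interval_type_of_error_family_general hI hx₀ ⟨y, hy, hx₀y⟩ hf₀c hf₀x₀ h𝓕cont h𝓕ord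
    (fun r hr => hnhds ▸ isLittleO_of_tendsto' ?_ (h𝓕o r hr)) hr₁ hm₁ hr₂ hm₂ hhc hhm hle₁ hle₂
  filter_upwards [self_mem_nhdsWithin] with x hx hx_zero
  exact absurd hx_zero (hf₀ne x hx.1 hx.2.ne')
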